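/- Let (A, t) be a C_k-algebra and let M ⊆ A be a proper cyclic deductive system. Then the following are equivalent: (1) M is maximal; (2) if a ∉ M, then there exists m ∈ M such that (⋀_{j=1}^{k} t^j(△a)) ∧ m = 0; (3) if (⋀_{j=1}^{k} t^j(△a)) ∨ b ∈ M, then a ∈ M or b ∈ M; (4) if a ∉ M, then ∼△(⋀_{j=1}^{k} t^j(a)) ∈ M; (5) if a ∉ M and b ∉ M, then a ⇁ b ∈ M and b ⇁ a ∈ M. -/

import Mathlib

universe u

/-- Modal pseudocomplemented De Morgan algebra (mpM-algebra). -/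
class MpM (A : Type u) extends DistribLattice A, BoundedOrder A where
  dm : A → A   -- De Morgan negation ∼
  ps : A → A   -- pseudocomplement *
  dm_dm : ∀ x : A, dm (dm x) = x
  dm_sup : ∀ x y : A, dm (x ⊔ y) = dm x ⊓ dm y
  pseudo : ∀ a x : A, a ⊓ x = ⊥ ↔ x ≤ ps a
  modal : ∀ x : A, x ⊔ dm x ≤ x ⊔ ps x

open MpM

variable {A : Type u} [MpM A]

/-- ∇x = ∼(∼x ∧ x*) -/
def nabla (x : A) : A := dm (dm x ⊓ ps x)

/-- △x = ∼∇∼x -/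
def tri (x : A) : A := dm (nabla (dm x))

/-- A C_k-algebra structure on an mpM-algebra `A`: an automorphism `t` with `t^k = id`. -/
structure CkStr (A : Type u) [MpM A] (k : ℕ) where
  t : A → A
  bij : Function.Bijective t
  map_inf : ∀ x y : A, t (x ⊓ y) = t x ⊓ t y
  map_sup : ∀ x y : A, t (x ⊔ y) = t x ⊔ t y
  map_dm : ∀ x : A, t (dm x) = dm (t x)
  map_ps : ∀ x : A, t (ps x) = ps (t x)
  map_bot : t (⊥ : A) = ⊥
  map_top : t (⊤ : A) = ⊤
  periodic : ∀ x : A, t^[k] x = x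

/-- Lattice filter: nonempty, upward closed, closed under binary meets. -/
def IsLatFilter (F : Set A) : Prop :=
  F.Nonempty ∧ (∀ x ∈ F, ∀ y : A, x ≤ y → y ∈ F) ∧ ∀ x ∈ F, ∀ y ∈ F, x ⊓ y ∈ F

/-- c-filter: a filter closed under △ and t. -/
def IsCFilter {k : ℕ} (T : CkStr A k) (F : Set A) : Prop :=
  IsLatFilter F ∧ ∀ x ∈ F, tri x ∈ F ∧ T.t x ∈ F

/-- maximal c-filter: proper and not properly contained in a proper c-filter. -/
def IsMaxCFilter {k : ℕ} (T : CkStr A k) (N : Set A) : Prop :=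
  IsCFilter T N ∧ N ≠ Set.univ ∧
    ∀ G : Set A, IsCFilter T G → G ≠ Set.univ → N ⊆ G → N = G

/-- prime filter -/
def IsPrimeFilter (P : Set A) : Prop :=
  IsLatFilter P ∧ P ≠ Set.univ ∧ ∀ x y : A, x ⊔ y ∈ P → x ∈ P ∨ y ∈ P

/-- ultrafilter: maximal proper (lattice) filter -/
def IsUltraFilter (U : Set A) : Prop :=
  IsLatFilter U ∧ U ≠ Set.univ ∧
    ∀ G : Set A, IsLatFilter G → G ≠ Set.univ → U ⊆ G → U = G

/-- Birula–Rasiowa transformation φ(P) = A \ {∼x : x ∈ P}. -/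
def brPhi (P : Set A) : Set A := Set.univ \ (dm '' P)

/-- a ⇁ b = (⋁_{i=1}^{k} ∇(∼ t^i(a))) ∨ b -/
def rimp {k : ℕ} (T : CkStr A k) (a b : A) : A :=
  ((Finset.Icc 1 k).sup fun i => nabla (dm (T.t^[i] a))) ⊔ b

/-- cyclic deductive system -/
def IsCDS {k : ℕ} (T : CkStr A k) (D : Set A) : Prop :=
  (⊤ : A) ∈ D ∧ ∀ x ∈ D, ∀ y : A, rimp T x y ∈ D → y ∈ D

/-- maximal cyclic deductive system -/
def IsMaxCDS {k : ℕ} (T : CkStr A k) (M : Set A) : Prop :=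
  IsCDS T M ∧ M ≠ Set.univ ∧
    ∀ G : Set A, IsCDS T G → G ≠ Set.univ → M ⊆ G → M = G

/-- the smallest cyclic deductive system containing `X` -/
def genCDS {k : ℕ} (T : CkStr A k) (X : Set A) : Set A :=
  ⋂₀ {D : Set A | IsCDS T D ∧ X ⊆ D}

/-- K(A) = {x : t(x) = x and ∇x = x} -/
def Kset {k : ℕ} (T : CkStr A k) : Set A := {x : A | T.t x = x ∧ nabla x = x}

/-- consistency operator ∘x = ⋀_{i=0}^{k} t^i((∼x ∨ x) ∧ (x ∧ ∼x)*) -/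
def cCirc {k : ℕ} (T : CkStr A k) (x : A) : A :=
  (Finset.Icc 0 k).inf fun i => T.t^[i] ((dm x ⊔ x) ⊓ ps (x ⊓ dm x))

/-- x → y = ∼((∼(x∨y))* ∧ (x∨y)) ∨ ((∼(x∧y))* ∧ (x∧y)) -/
def mpTo (x y : A) : A :=
  dm (ps (dm (x ⊔ y)) ⊓ (x ⊔ y)) ⊔ (ps (dm (x ⊓ y)) ⊓ (x ⊓ y))

/-- x ⇒ y = (x → y) ∧ (∼y → ∼x) -/
def mpIff (x y : A) : A := mpTo x y ⊓ mpTo (dm y) (dm x)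

/-!
Write `□a = ⋀_{j=1}^{k} t^j(△a)`. Each `△x` has the complement `∼△x`, and periodicity of `t` makes
`□` a multiplicative interior operator whose values are complemented. Hence
`a ⇁ b = ∼□a ∨ b` is residual to meeting with `□a`: `c ≤ a ⇁ b ↔ c ∧ □a ≤ b`. It follows that the
cyclic deductive systems are the lattice filters closed under `□`, and that `{x | a ⇁ x ∈ M}` is
again a cyclic deductive system, containing both `M` and `a`. If `M` is maximal and `a ∉ M`, that
system is everything, so it contains `0`, which says `∼□a ∈ M`; the other conditions are then
consequences of `∼□a` being the complement of `□a`.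
-/

open Function OrderDual

theorem inf_iterate_le_iterate_of_isPeriodicPt {α : Type*} [SemilatticeInf α] [OrderTop α]
    {f : α → α} {x : α} {k : ℕ} [NeZero k] (hx : IsPeriodicPt f k x) (m : ℕ) :
    ((Finset.Icc 1 k).inf fun j => f^[j] x) ≤ f^[m] x := by
  have hk : 0 < k := NeZero.pos k
  obtain hm | hm := (m % k).eq_zero_or_pos
  · have hxm : f^[m] x = f^[k] x := by
      rw [← hx.iterate_mod_apply m, hm, iterate_zero_apply, hx.eq]
    exact hxm ▸ Finset.inf_le (Finset.mem_Icc.2 ⟨hk, le_rfl⟩)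
  · exact hx.iterate_mod_apply m ▸ Finset.inf_le (Finset.mem_Icc.2 ⟨hm, (m.mod_lt hk).le⟩)

namespace MpM

theorem dm_antitone : Antitone (dm : A → A) := fun x y h =>
  inf_eq_right.1 (by rw [← dm_sup, sup_eq_right.2 h])

theorem dm_le_dm_iff {x y : A} : dm x ≤ dm y ↔ y ≤ x :=
  ⟨fun h => by simpa only [dm_dm] using dm_antitone h, fun h => dm_antitone h⟩

/-- De Morgan negation as an order isomorphism onto the order dual; it transfers the lattice laws
of `dm` from those of order isomorphisms. -/
def dmOrderIso : A ≃o Aᵒᵈ where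
  toEquiv := (Involutive.toPerm dm dm_dm).trans toDual
  map_rel_iff' := dm_le_dm_iff

theorem dm_top : dm (⊤ : A) = ⊥ := (dmOrderIso (A := A)).map_top

theorem dm_bot : dm (⊥ : A) = ⊤ := (dmOrderIso (A := A)).map_bot

theorem dm_inf (x y : A) : dm (x ⊓ y) = dm x ⊔ dm y := dmOrderIso.map_inf x y

theorem dm_finset_inf {ι : Type*} (s : Finset ι) (f : ι → A) :
    dm (s.inf f) = s.sup fun i => dm (f i) :=
  map_finset_inf (dmOrderIso (A := A)) s f

theorem disjoint_iff_le_ps {x y : A} : Disjoint x y ↔ y ≤ ps x :=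
  disjoint_iff.trans (pseudo x y)

theorem ps_sup (x y : A) : ps (x ⊔ y) = ps x ⊓ ps y :=
  eq_of_forall_le_iff fun c => by
    simp only [le_inf_iff, ← disjoint_iff_le_ps, disjoint_sup_left]

end MpM

theorem nabla_dm (x : A) : nabla (dm x) = dm (tri x) := (dm_dm _).symm

theorem tri_eq_inf_ps_dm (x : A) : tri x = x ⊓ ps (dm x) := by
  simp only [tri, nabla, dm_dm]

theorem tri_le (x : A) : tri x ≤ x := tri_eq_inf_ps_dm x ▸ inf_le_left

theorem disjoint_tri_dm (x : A) : Disjoint (tri x) (dm x) := by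
  rw [disjoint_comm, disjoint_iff_le_ps, tri_eq_inf_ps_dm]
  exact inf_le_right

theorem tri_eq_self_of_disjoint_dm {x : A} (h : Disjoint x (dm x)) : tri x = x := by
  rw [tri_eq_inf_ps_dm, inf_eq_left, ← disjoint_iff_le_ps]
  exact h.symm

theorem tri_top : tri (⊤ : A) = ⊤ :=
  tri_eq_self_of_disjoint_dm (dm_top (A := A) ▸ disjoint_bot_right)

theorem tri_inf (x y : A) : tri (x ⊓ y) = tri x ⊓ tri y := by
  simp only [tri_eq_inf_ps_dm, dm_inf, ps_sup, inf_inf_inf_comm]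

theorem tri_finset_inf {ι : Type*} (s : Finset ι) (f : ι → A) :
    tri (s.inf f) = s.inf fun i => tri (f i) :=
  Finset.apply_inf_eq_inf_comp tri tri_inf tri_top

theorem inf_dm_tri_le_dm (x : A) : x ⊓ dm (tri x) ≤ dm x := by
  have dual_modal : x ⊓ dm (ps (dm x)) ≤ x ⊓ dm x := by
    simpa only [dm_sup, dm_dm] using dm_antitone (modal (dm x))
  rw [tri_eq_inf_ps_dm, dm_inf, inf_sup_left]
  exact sup_le inf_le_right (dual_modal.trans inf_le_right)

theorem isCompl_tri_dm_tri (x : A) : IsCompl (tri x) (dm (tri x)) := by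
  have hdisj : Disjoint (tri x) (dm (tri x)) :=
    disjoint_iff_inf_le.2 <| calc
      tri x ⊓ dm (tri x) ≤ tri x ⊓ dm x :=
        le_inf inf_le_left ((inf_le_inf_right _ (tri_le x)).trans (inf_dm_tri_le_dm x))
      _ ≤ ⊥ := (disjoint_tri_dm x).le_bot
  refine ⟨hdisj, codisjoint_iff.2 ?_⟩
  calc tri x ⊔ dm (tri x) = dm (tri x ⊓ dm (tri x)) := by rw [dm_inf, dm_dm, sup_comm]
    _ = ⊤ := by rw [hdisj.eq_bot, dm_bot]

section CyclicTri

variable {k : ℕ} (T : CkStr A k)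

namespace CkStr

theorem iterate_inf (n : ℕ) (x y : A) : T.t^[n] (x ⊓ y) = T.t^[n] x ⊓ T.t^[n] y :=
  Semiconj₂.iterate (op := (· ⊓ ·)) T.map_inf n x y

theorem iterate_finset_inf {ι : Type*} (n : ℕ) (s : Finset ι) (f : ι → A) :
    T.t^[n] (s.inf f) = s.inf fun i => T.t^[n] (f i) :=
  Finset.apply_inf_eq_inf_comp T.t^[n] (T.iterate_inf n) (iterate_fixed T.map_top n)

theorem iterate_tri (n : ℕ) (x : A) : T.t^[n] (tri x) = tri (T.t^[n] x) := by
  have hcomm : Function.Commute T.t tri := fun x => by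
    rw [tri_eq_inf_ps_dm, tri_eq_inf_ps_dm, T.map_inf, T.map_ps, T.map_dm]
  exact hcomm.iterate_left n x

/-- The operator `□a = ⋀_{j=1}^{k} t^j(△a)`, through which the implication becomes
`a ⇁ b = ∼□a ∨ b`. -/
def cyclicTri (a : A) : A := (Finset.Icc 1 k).inf fun j => T.t^[j] (tri a)

theorem cyclicTri_def (a : A) :
    T.cyclicTri a = (Finset.Icc 1 k).inf fun j => T.t^[j] (tri a) := rfl

theorem tri_inf_iterate (a : A) :
    tri ((Finset.Icc 1 k).inf fun j => T.t^[j] a) = T.cyclicTri a := by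
  simp only [tri_finset_inf, cyclicTri, iterate_tri]

theorem isCompl_cyclicTri (a : A) : IsCompl (T.cyclicTri a) (dm (T.cyclicTri a)) :=
  T.tri_inf_iterate a ▸ isCompl_tri_dm_tri _

theorem cyclicTri_inf (a b : A) : T.cyclicTri (a ⊓ b) = T.cyclicTri a ⊓ T.cyclicTri b := by
  simp only [cyclicTri, tri_inf, iterate_inf]
  exact Finset.inf_inf

theorem cyclicTri_monotone : Monotone T.cyclicTri := fun a b h =>
  inf_eq_left.1 (by rw [← cyclicTri_inf, inf_eq_left.2 h])

variable [NeZero k]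

theorem cyclicTri_le_iterate (n : ℕ) (a : A) : T.cyclicTri a ≤ T.t^[n] (tri a) :=
  inf_iterate_le_iterate_of_isPeriodicPt (T.periodic (tri a)) n

theorem cyclicTri_le (a : A) : T.cyclicTri a ≤ a :=
  (T.cyclicTri_le_iterate 0 a).trans (tri_le a)

theorem cyclicTri_le_iterate_cyclicTri (n : ℕ) (a : A) :
    T.cyclicTri a ≤ T.t^[n] (T.cyclicTri a) := by
  rw [cyclicTri_def, iterate_finset_inf]
  refine Finset.le_inf fun j _ => ?_
  rw [← iterate_add_apply]
  exact T.cyclicTri_le_iterate (n + j) a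

theorem cyclicTri_cyclicTri (a : A) : T.cyclicTri (T.cyclicTri a) = T.cyclicTri a := by
  refine (T.cyclicTri_le _).antisymm (Finset.le_inf fun j _ => ?_)
  rw [tri_eq_self_of_disjoint_dm (T.isCompl_cyclicTri a).disjoint]
  exact T.cyclicTri_le_iterate_cyclicTri j a

end CkStr

theorem rimp_eq_dm_cyclicTri_sup (a b : A) : rimp T a b = dm (T.cyclicTri a) ⊔ b := by
  simp only [rimp, CkStr.cyclicTri, dm_finset_inf, nabla_dm, CkStr.iterate_tri]

theorem le_rimp_iff {a b c : A} : c ≤ rimp T a b ↔ c ⊓ T.cyclicTri a ≤ b := by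
  rw [rimp_eq_dm_cyclicTri_sup, sup_comm, (T.isCompl_cyclicTri a).le_sup_right_iff_inf_left_le]

theorem gc_inf_cyclicTri_rimp (a : A) : GaloisConnection (· ⊓ T.cyclicTri a) (rimp T a) :=
  fun _ _ => (le_rimp_iff T).symm

theorem rimp_eq_top_iff {a b : A} : rimp T a b = ⊤ ↔ T.cyclicTri a ≤ b := by
  rw [eq_top_iff, le_rimp_iff, top_inf_eq]

theorem cyclicTri_rimp_le [NeZero k] (a b : A) :
    T.cyclicTri (rimp T a b) ≤ rimp T a (T.cyclicTri b) := by
  rw [le_rimp_iff]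
  calc T.cyclicTri (rimp T a b) ⊓ T.cyclicTri a
      = T.cyclicTri (rimp T a b ⊓ T.cyclicTri a) := by rw [T.cyclicTri_inf, T.cyclicTri_cyclicTri]
    _ ≤ T.cyclicTri b := T.cyclicTri_monotone ((le_rimp_iff T).1 le_rfl)

end CyclicTri

theorem IsLatFilter.mem_of_sup_mem_of_disjoint {F : Set A} (hF : IsLatFilter F) {x y z : A}
    (hxy : x ⊔ y ∈ F) (hz : z ∈ F) (hxz : Disjoint x z) : y ∈ F := by
  obtain ⟨-, hup, hinf⟩ := hF
  refine hup _ (hinf _ hxy _ hz) y ?_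
  rw [inf_sup_right, hxz.eq_bot, bot_sup_eq]
  exact inf_le_left

section CyclicDeductiveSystem

variable {k : ℕ} {T : CkStr A k} {M : Set A}

theorem IsCDS.mem_of_cyclicTri_le (hM : IsCDS T M) {x y : A} (hx : x ∈ M)
    (h : T.cyclicTri x ≤ y) : y ∈ M :=
  hM.2 x hx y ((rimp_eq_top_iff T).2 h ▸ hM.1)

theorem IsCDS.isLatFilter [NeZero k] (hM : IsCDS T M) : IsLatFilter M := by
  refine ⟨⟨⊤, hM.1⟩, fun x hx y hxy => hM.mem_of_cyclicTri_le hx ((T.cyclicTri_le x).trans hxy),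
    fun x hx y hy => hM.2 x hx _ (hM.mem_of_cyclicTri_le hy ?_)⟩
  rw [le_rimp_iff, inf_comm]
  exact inf_le_inf (T.cyclicTri_le x) (T.cyclicTri_le y)

theorem IsLatFilter.isCDS (hM : IsLatFilter M) (htri : ∀ x ∈ M, T.cyclicTri x ∈ M) :
    IsCDS T M := by
  obtain ⟨⟨m, hm⟩, hup, hinf⟩ := hM
  refine ⟨hup m hm ⊤ le_top, fun x hx y hxy => hup _ (hinf _ hxy _ (htri x hx)) y ?_⟩
  exact (le_rimp_iff T).1 le_rfl

theorem IsCDS.setOf_rimp_mem [NeZero k] (hM : IsCDS T M) (a : A) :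
    IsCDS T {x | rimp T a x ∈ M} := by
  obtain ⟨-, hup, hinf⟩ := hM.isLatFilter
  have gc := gc_inf_cyclicTri_rimp T a
  refine IsLatFilter.isCDS ⟨⟨⊤, ?_⟩, fun x hx y hxy => hup _ hx _ (gc.monotone_u hxy),
    fun x hx y hy => ?_⟩ fun x hx => hM.mem_of_cyclicTri_le hx (cyclicTri_rimp_le T a x)
  · simpa only [Set.mem_ofPred_eq, gc.u_top] using hM.1
  · simpa only [Set.mem_ofPred_eq, gc.u_inf] using hinf _ hx _ hy

theorem IsMaxCDS.dm_cyclicTri_mem [NeZero k] (hM : IsMaxCDS T M) {a : A} (ha : a ∉ M) :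
    dm (T.cyclicTri a) ∈ M := by
  obtain ⟨hcds, -, hmax⟩ := hM
  have hsub : M ⊆ {x | rimp T a x ∈ M} := fun x hx =>
    hcds.isLatFilter.2.1 x hx _ ((le_rimp_iff T).2 inf_le_left)
  have ha_mem : rimp T a a ∈ M := (rimp_eq_top_iff T).2 (T.cyclicTri_le a) ▸ hcds.1
  have huniv : {x | rimp T a x ∈ M} = Set.univ := by
    by_contra hne
    exact ha (hmax _ (hcds.setOf_rimp_mem a) hne hsub ▸ ha_mem)
  have hbot : rimp T a ⊥ ∈ M := huniv.ge (Set.mem_univ ⊥)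
  rwa [rimp_eq_dm_cyclicTri_sup, sup_bot_eq] at hbot

theorem IsCDS.isMaxCDS_of_rimp_mem (hM : IsCDS T M) (hne : M ≠ Set.univ)
    (h : ∀ a b : A, a ∉ M → b ∉ M → rimp T a b ∈ M) : IsMaxCDS T M := by
  refine ⟨hM, hne, fun G hG hGne hMG => hMG.antisymm fun a ha => ?_⟩
  obtain ⟨b, hb⟩ := (Set.ne_univ_iff_exists_notMem G).1 hGne
  by_contra haM
  exact hb (hG.2 a ha b (hMG (h a b haM fun hbM => hb (hMG hbM))))

end CyclicDeductiveSystem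

theorem stmt12 {k : ℕ} (hk : 0 < k) (T : CkStr A k) (M : Set A)
    (hM : IsCDS T M) (hprop : M ≠ Set.univ) :
    List.TFAE
      [ ∀ G : Set A, IsCDS T G → G ≠ Set.univ → M ⊆ G → M = G,
        ∀ a : A, a ∉ M →
          ∃ m ∈ M, ((Finset.Icc 1 k).inf fun j => T.t^[j] (tri a)) ⊓ m = ⊥,
        ∀ a b : A,
          ((Finset.Icc 1 k).inf fun j => T.t^[j] (tri a)) ⊔ b ∈ M → a ∈ M ∨ b ∈ M,
        ∀ a : A, a ∉ M → dm (tri ((Finset.Icc 1 k).inf fun j => T.t^[j] a)) ∈ M,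
        ∀ a b : A, a ∉ M → b ∉ M → rimp T a b ∈ M ∧ rimp T b a ∈ M ] := by
  have : NeZero k := ⟨hk.ne'⟩
  simp only [T.tri_inf_iterate, ← T.cyclicTri_def]
  have hfilter : IsLatFilter M := hM.isLatFilter
  have rimp_mem {a : A} (b : A) (h : dm (T.cyclicTri a) ∈ M) : rimp T a b ∈ M :=
    hfilter.2.1 _ h _ (rimp_eq_dm_cyclicTri_sup T a b ▸ le_sup_left)
  tfae_have 1 → 4 := fun hmax a ha => IsMaxCDS.dm_cyclicTri_mem ⟨hM, hprop, hmax⟩ ha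
  tfae_have 4 → 2 := fun h a ha => ⟨_, h a ha, (T.isCompl_cyclicTri a).inf_eq_bot⟩
  tfae_have 2 → 3 := fun h a b hab => or_iff_not_imp_left.2 fun ha =>
    have ⟨_, hm, ham⟩ := h a ha
    hfilter.mem_of_sup_mem_of_disjoint hab hm (disjoint_iff.2 ham)
  tfae_have 3 → 4 := fun h a ha =>
    (h a _ ((T.isCompl_cyclicTri a).sup_eq_top ▸ hM.1)).resolve_left ha
  tfae_have 4 → 5 := fun h a b ha hb => ⟨rimp_mem b (h a ha), rimp_mem a (h b hb)⟩
  tfae_have 5 → 1 := fun h => (hM.isMaxCDS_of_rimp_mem hprop fun a b ha hb => (h a b ha hb).1).2.2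
  tfae_finish
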